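/- Let G be a graph on n vertices with adjacency matrix A and stability number α(G), and let k > 0 be a noninteger real scalar. Then the quadratic form q_{A,k}(x) := x^T (kA + kI - J) x has a strict local minimizer over the nonnegative orthant {x ∈ ℝ^n : x ≥ 0} if and only if α(G) < k. -/

import Mathlib

open Matrix
open scoped RealInnerProductSpace

/-- The stability (independence) number of a graph: the size of the largest set of
pairwise non-adjacent vertices. -/
noncomputable def stabilityNumber {V : Type*} (G : SimpleGraph V) : ℕ :=
  sSup {k | ∃ s : Finset V, s.card = k ∧ ∀ i ∈ s, ∀ j ∈ s, i ≠ j → ¬ G.Adj i j}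

/-- The matrix `M_{A,k} = k A + k I - J`, where `J` is the all-ones matrix. -/
noncomputable def MAk {n : ℕ} (A : Matrix (Fin n) (Fin n) ℝ) (k : ℝ) : Matrix (Fin n) (Fin n) ℝ :=
  k • A + k • (1 : Matrix (Fin n) (Fin n) ℝ) - Matrix.of (fun _ _ => (1 : ℝ))

/-- Entrywise square of a vector. -/
def vsq {n : ℕ} (x : Fin n → ℝ) : Fin n → ℝ := fun i => (x i) ^ 2

/-- A symmetric matrix `M` is copositive if `xᵀ M x ≥ 0` for all entrywise nonnegative `x`. -/
def Copositive {n : ℕ} (M : Matrix (Fin n) (Fin n) ℝ) : Prop :=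
  ∀ x : Fin n → ℝ, (∀ i, 0 ≤ x i) → 0 ≤ x ⬝ᵥ M.mulVec x

/-- The quartic form `p_M(x) = (x²)ᵀ M (x²)`. -/
noncomputable def quarticForm {n : ℕ} (M : Matrix (Fin n) (Fin n) ℝ) :
    EuclideanSpace ℝ (Fin n) → ℝ :=
  fun x => vsq x ⬝ᵥ M.mulVec (vsq x)

/-- The quadratic form `q_M(x) = xᵀ M x`. -/
noncomputable def quadForm {n : ℕ} (M : Matrix (Fin n) (Fin n) ℝ) :
    EuclideanSpace ℝ (Fin n) → ℝ :=
  fun x => x ⬝ᵥ M.mulVec x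

/-- `xm` is a local minimizer of `f` over `Ω`: `xm ∈ Ω` and there is `ε > 0` such that
`f xm ≤ f x` for all `x ∈ Ω` with `‖x - xm‖ ≤ ε` (Euclidean norm). -/
def IsLocalMinimizer {n : ℕ} (f : EuclideanSpace ℝ (Fin n) → ℝ)
    (Ω : Set (EuclideanSpace ℝ (Fin n))) (xm : EuclideanSpace ℝ (Fin n)) : Prop :=
  xm ∈ Ω ∧ ∃ ε > 0, ∀ x ∈ Ω, ‖x - xm‖ ≤ ε → f xm ≤ f x

/-- `xm` is a strict local minimizer of `f` over `Ω`: `xm ∈ Ω` and there is `ε > 0` such that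
`f xm < f x` for all `x ∈ Ω` with `x ≠ xm` and `‖x - xm‖ ≤ ε` (Euclidean norm). -/
def IsStrictLocalMinimizer {n : ℕ} (f : EuclideanSpace ℝ (Fin n) → ℝ)
    (Ω : Set (EuclideanSpace ℝ (Fin n))) (xm : EuclideanSpace ℝ (Fin n)) : Prop :=
  xm ∈ Ω ∧ ∃ ε > 0, ∀ x ∈ Ω, x ≠ xm → ‖x - xm‖ ≤ ε → f xm < f x

theorem stab_le {n : ℕ} (G : SimpleGraph (Fin n)) (s : Finset (Fin n))
    (hs : ∀ i ∈ s, ∀ j ∈ s, i ≠ j → ¬ G.Adj i j) : s.card ≤ stabilityNumber G := by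
  apply le_csSup
  · refine ⟨n, ?_⟩
    rintro _ ⟨t, rfl, -⟩
    simpa using Finset.card_le_univ t
  · exact ⟨s, rfl, hs⟩

theorem stab_exists {n : ℕ} (G : SimpleGraph (Fin n)) :
    ∃ s : Finset (Fin n), s.card = stabilityNumber G ∧
      ∀ i ∈ s, ∀ j ∈ s, i ≠ j → ¬ G.Adj i j := by
  have h := Nat.sSup_mem (s := {k | ∃ s : Finset (Fin n), s.card = k ∧
    ∀ i ∈ s, ∀ j ∈ s, i ≠ j → ¬ G.Adj i j}) ⟨0, ∅, by simp⟩ (by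
      refine ⟨n, ?_⟩
      rintro _ ⟨t, rfl, -⟩
      simpa using Finset.card_le_univ t)
  exact h

theorem stable_form {n : ℕ} (G : SimpleGraph (Fin n)) [DecidableRel G.Adj] (x : Fin n → ℝ)
    (h : ∀ i, x i ≠ 0 → ∀ j, x j ≠ 0 → i ≠ j → ¬ G.Adj i j) :
    x ⬝ᵥ (G.adjMatrix ℝ + 1).mulVec x = ∑ i, x i ^ 2 := by
  rw [Matrix.add_mulVec, dotProduct_add, Matrix.one_mulVec]
  have h0 : x ⬝ᵥ (G.adjMatrix ℝ).mulVec x = 0 := by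
    simp only [dotProduct, Matrix.mulVec, Finset.mul_sum]
    refine Finset.sum_eq_zero fun i _ => Finset.sum_eq_zero fun j _ => ?_
    by_cases hi : x i = 0
    · simp [hi]
    by_cases hj : x j = 0
    · simp [hj]
    have : ¬ G.Adj i j := by
      intro hadj
      exact h i hi j hj hadj.ne hadj
    simp [SimpleGraph.adjMatrix_apply, this]
  rw [h0, zero_add]
  simp [dotProduct, sq]

theorem motzkin {n : ℕ} (G : SimpleGraph (Fin n)) [DecidableRel G.Adj] (N : ℕ) :
    ∀ x : Fin n → ℝ, (∀ i, 0 ≤ x i) → (Finset.univ.filter fun i => x i ≠ 0).card = N →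
    (∑ i, x i) ^ 2 ≤ stabilityNumber G * (x ⬝ᵥ (G.adjMatrix ℝ + 1).mulVec x) := by
  induction N using Nat.strong_induction_on with
  | _ N ih =>
  intro x hx hN
  by_cases hst : ∀ i, x i ≠ 0 → ∀ j, x j ≠ 0 → i ≠ j → ¬ G.Adj i j
  · rw [stable_form G x hst]
    have hc := stab_le G (Finset.univ.filter fun i => x i ≠ 0) (by
      intro i hi j hj
      exact hst i (by simpa using hi) j (by simpa using hj))
    have hs : ∑ i, x i = ∑ i ∈ Finset.univ.filter (fun i => x i ≠ 0), x i :=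
      (Finset.sum_filter_ne_zero _).symm
    have h1 := sq_sum_le_card_mul_sum_sq (s := Finset.univ.filter (fun i => x i ≠ 0)) (f := x)
    rw [hs]
    refine h1.trans ?_
    refine mul_le_mul (by exact_mod_cast hc) ?_ (Finset.sum_nonneg fun i _ => sq_nonneg _)
      (by positivity)
    exact Finset.sum_le_sum_of_subset_of_nonneg (Finset.filter_subset _ _)
      (fun i _ _ => sq_nonneg _)
  · push Not at hst
    have key : ∃ i j, x i ≠ 0 ∧ x j ≠ 0 ∧ G.Adj i j ∧
        (G.adjMatrix ℝ + 1).mulVec x i ≤ (G.adjMatrix ℝ + 1).mulVec x j := by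
      obtain ⟨i, hi, j, hj, -, hadj⟩ := hst
      rcases le_total ((G.adjMatrix ℝ + 1).mulVec x i) ((G.adjMatrix ℝ + 1).mulVec x j) with h | h
      · exact ⟨i, j, hi, hj, hadj, h⟩
      · exact ⟨j, i, hj, hi, hadj.symm, h⟩
    obtain ⟨i, j, hi, hj, hadj, hle⟩ := key
    have hij : i ≠ j := hadj.ne
    set B := G.adjMatrix ℝ + 1 with hB
    have hBs : Bᵀ = B := by simp [hB]
    set d : Fin n → ℝ := Pi.single i 1 - Pi.single j 1 with hd
    set y : Fin n → ℝ := x + x j • d with hy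
    have hyj : y j = 0 := by simp [hy, hd, hij.symm]
    have hyi : y i = x i + x j := by simp [hy, hd, hij]
    have hyl : ∀ l, l ≠ i → l ≠ j → y l = x l := by
      intro l h1 h2; simp [hy, hd, h1, h2]
    have hy0 : ∀ l, 0 ≤ y l := by
      intro l
      by_cases h1 : l = i
      · subst h1; rw [hyi]; exact add_nonneg (hx _) (hx _)
      by_cases h2 : l = j
      · subst h2; rw [hyj]
      rw [hyl l h1 h2]; exact hx l
    have hlt : (Finset.univ.filter fun i => y i ≠ 0).card < N := by
      rw [← hN]
      apply Finset.card_lt_card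
      rw [Finset.ssubset_iff_of_subset]
      · exact ⟨j, by simpa using hj, by simp [hyj]⟩
      · intro l hl
        simp only [Finset.mem_filter, Finset.mem_univ, true_and] at hl ⊢
        by_cases h1 : l = i
        · subst h1; exact hi
        by_cases h2 : l = j
        · subst h2; exact hj
        rwa [hyl l h1 h2] at hl
    have h := ih _ hlt y hy0 rfl
    have hsum : ∑ l, y l = ∑ l, x l := by
      simp [hy, hd, Finset.sum_add_distrib, ← Finset.mul_sum]
    have hdB : ∀ v : Fin n → ℝ, d ⬝ᵥ v = v i - v j := by
      intro v; simp [hd, sub_dotProduct]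
    have hdd : d ⬝ᵥ B.mulVec d = 0 := by
      rw [hdB]
      simp [hd, hB, Matrix.mulVec_sub, Matrix.add_apply, SimpleGraph.adjMatrix_apply, hadj,
        hadj.symm, Matrix.one_apply, hij, hij.symm]
    have hsymm : x ⬝ᵥ B.mulVec d = d ⬝ᵥ B.mulVec x := by
      rw [Matrix.dotProduct_mulVec, ← Matrix.mulVec_transpose, hBs, dotProduct_comm]
    have hQ : y ⬝ᵥ B.mulVec y ≤ x ⬝ᵥ B.mulVec x := by
      have : y ⬝ᵥ B.mulVec y = x ⬝ᵥ B.mulVec x + 2 * x j * (d ⬝ᵥ B.mulVec x) := by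
        simp only [hy, Matrix.mulVec_add, Matrix.mulVec_smul, add_dotProduct, dotProduct_add,
          smul_dotProduct, dotProduct_smul, smul_eq_mul, hsymm, hdd]
        ring
      rw [this, hdB]
      nlinarith [hx j]
    rw [← hsum]
    exact h.trans (mul_le_mul_of_nonneg_left hQ (by positivity))

theorem quadForm_eq {n : ℕ} (G : SimpleGraph (Fin n)) [DecidableRel G.Adj] (k : ℝ)
    (x : EuclideanSpace ℝ (Fin n)) :
    quadForm (MAk (G.adjMatrix ℝ) k) x =
      k * (x.ofLp ⬝ᵥ (G.adjMatrix ℝ + 1).mulVec x.ofLp) - (∑ i, x i) ^ 2 := by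
  have hJ : x.ofLp ⬝ᵥ (Matrix.of (fun _ _ => (1 : ℝ)) : Matrix (Fin n) (Fin n) ℝ).mulVec x.ofLp
      = (∑ i, x i) ^ 2 := by
    simp [dotProduct, Matrix.mulVec, ← Finset.sum_mul, sq]
  unfold quadForm MAk
  rw [← smul_add, Matrix.sub_mulVec, dotProduct_sub, hJ, Matrix.smul_mulVec, dotProduct_smul,
    smul_eq_mul]

theorem quadForm_smul {n : ℕ} (M : Matrix (Fin n) (Fin n) ℝ) (t : ℝ)
    (x : EuclideanSpace ℝ (Fin n)) : quadForm M (t • x) = t ^ 2 * quadForm M x := by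
  unfold quadForm
  simp only [WithLp.ofLp_smul, Matrix.mulVec_smul, smul_dotProduct, dotProduct_smul, smul_eq_mul]
  ring

/-- For `k > 0` noninteger, `q_{A,k}` has a strict local minimizer over the nonnegative orthant
iff `α(G) < k`. -/
theorem qAk_has_strictLocalMinimizer_iff {n : ℕ} (G : SimpleGraph (Fin n)) [DecidableRel G.Adj]
    (k : ℝ) (hk : 0 < k) (hk' : ∀ m : ℤ, (m : ℝ) ≠ k) :
    (∃ xm, IsStrictLocalMinimizer (quadForm (MAk (G.adjMatrix ℝ) k))
        {x : EuclideanSpace ℝ (Fin n) | ∀ i, 0 ≤ x i} xm) ↔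
      (stabilityNumber G : ℝ) < k := by
  constructor
  · rintro ⟨xm, hxm, ε, hε, h⟩
    set M := MAk (G.adjMatrix ℝ) k with hM
    -- a strict local minimizer must be the origin
    have hz : xm = 0 := by
      by_contra hne
      have hpos : 0 < ‖xm‖ := norm_pos_iff.mpr hne
      obtain ⟨t, ht0, ht1, htε⟩ : ∃ t : ℝ, 0 < t ∧ t < 1 ∧ t * ‖xm‖ ≤ ε := by
        refine ⟨min (1 / 2) (ε / ‖xm‖), by positivity, ?_, ?_⟩
        · exact lt_of_le_of_lt (min_le_left _ _) (by norm_num)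
        · calc _ ≤ ε / ‖xm‖ * ‖xm‖ := by gcongr; exact min_le_right _ _
            _ = ε := by field_simp
      have hgen : ∀ s : ℝ, |s| = t → quadForm M xm < (1 + s) ^ 2 * quadForm M xm := by
        intro s hs
        rw [← quadForm_smul]
        have e : (1 + s) • xm - xm = s • xm := by rw [add_smul, one_smul]; abel
        apply h
        · intro i
          have : 0 ≤ 1 + s := by linarith [neg_abs_le s]
          simpa using mul_nonneg this (hxm i)
        · intro hc
          rw [← sub_eq_zero, e, smul_eq_zero] at hc
          rcases hc with hc | hc
          · rw [hc, abs_zero] at hs; linarith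
          · exact hne hc
        · rw [e, norm_smul, Real.norm_eq_abs, hs]; exact htε
      have h1 := hgen t (abs_of_pos ht0)
      have h2 := hgen (-t) (by rw [abs_neg, abs_of_pos ht0])
      rcases le_total 0 (quadForm M xm) with hq | hq
      · nlinarith [mul_nonneg hq ht0.le, mul_nonneg (mul_nonneg hq ht0.le) (sub_nonneg.2 ht1.le)]
      · nlinarith [mul_nonneg (neg_nonneg.2 hq) ht0.le, mul_nonneg (mul_nonneg (neg_nonneg.2 hq) ht0.le) ht0.le]
    subst hz
    obtain ⟨s, hs, hst⟩ := stab_exists G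
    rcases Nat.eq_zero_or_pos (stabilityNumber G) with h0 | h0
    · rw [h0]; simpa using hk
    let x : EuclideanSpace ℝ (Fin n) := WithLp.toLp 2 (fun i => if i ∈ s then 1 else 0)
    have hxi : ∀ i, x i = if i ∈ s then 1 else 0 := fun i => rfl
    have hx0 : x ≠ 0 := by
      obtain ⟨i, hi⟩ := Finset.card_pos.1 (hs ▸ h0)
      intro hc
      have := congrArg (fun v : EuclideanSpace ℝ (Fin n) => v i) hc
      simp [hxi, hi] at this
    have hpos : 0 < ‖x‖ := norm_pos_iff.mpr hx0
    have hq := h ((ε / ‖x‖) • x) (by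
        intro i
        have : 0 ≤ x i := by rw [hxi]; split_ifs <;> norm_num
        simpa using mul_nonneg (by positivity) this)
      (smul_ne_zero (by positivity) hx0) (by
        rw [sub_zero, norm_smul, Real.norm_of_nonneg (by positivity)]
        field_simp; exact le_rfl)
    have hq0 : quadForm M 0 = 0 := by simp [quadForm]
    rw [hq0, quadForm_smul] at hq
    have hq' : 0 < quadForm M x := pos_of_mul_pos_right hq (by positivity)
    rw [hM, quadForm_eq, stable_form G x.ofLp (by
      intro i hi j hj
      refine hst i ?_ j ?_
      · by_contra hc; exact hi (by simp [hxi, hc])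
      · by_contra hc; exact hj (by simp [hxi, hc]))] at hq'
    have e1 : ∑ i, x i = stabilityNumber G := by simp [hxi, hs]
    have e2 : ∑ i, x i ^ 2 = stabilityNumber G := by simp [hxi, hs]
    rw [e1, e2] at hq'
    have h0' : (0 : ℝ) < stabilityNumber G := by exact_mod_cast h0
    nlinarith
  · intro hα
    refine ⟨0, fun i => by simp, 1, one_pos, ?_⟩
    intro x hx hx0 _
    have hq0 : quadForm (MAk (G.adjMatrix ℝ) k) 0 = 0 := by simp [quadForm]
    rw [hq0, quadForm_eq]
    have hm := motzkin G _ x.ofLp hx rfl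
    have hS : 0 < ∑ i, x i := by
      apply lt_of_le_of_ne (Finset.sum_nonneg fun i _ => hx i)
      intro hc
      apply hx0
      ext i
      exact (Finset.sum_eq_zero_iff_of_nonneg fun i _ => hx i).1 hc.symm i (Finset.mem_univ i)
    have hS2 : 0 < (∑ i, x i) ^ 2 := by positivity
    have hα0 : (0 : ℝ) ≤ stabilityNumber G := by positivity
    have hQ : 0 < x.ofLp ⬝ᵥ (G.adjMatrix ℝ + 1).mulVec x.ofLp :=
      pos_of_mul_pos_right (lt_of_lt_of_le hS2 hm) hα0
    nlinarith
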